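/- Every N-qubit (2,2)-locally maximally entanglable state is local-unitary equivalent to a phase state: if a unit vector |ψ⟩ ∈ (ℂ²)^{⊗N} is (2,2)-LME, then there exist single-qubit unitaries u_1, …, u_N ∈ U(2) and real phases θ_{i_1 … i_N} such that |ψ⟩ = (u_1 ⊗ ⋯ ⊗ u_N) · 2^{−N/2} Σ_{i_1, …, i_N ∈ {0,1}} e^{i θ_{i_1 … i_N}} |i_1 … i_N⟩. -/

import Mathlib

open Matrix

noncomputable section

/-! Let `ρ_k` be the reduced density matrix of the `k`-th qubit. Since `V_k` is an isometry into two
qubits and the global state is maximally entangled, the two-qubit operator `V_k ρ_k V_kᴴ` has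
scalar marginals, which forces it to be a real symmetric matrix in the magic basis. It has rank at
most two, so its range is spanned by two orthonormal real quaternions `X` and `Y`. As `X` is unitary
and `Xᴴ Y` is anti-Hermitian, both are made diagonal by the same pair of unitaries, and so on the
range of `ρ_k` the isometry `V_k` is a unitary `w_k` followed by `|i⟩ ↦ L_k |i⟩ ⊗ R_k |i⟩`.
Therefore the coefficient matrix of the global state is `(⨂ L_k) · diag φ · (⨂ R_k)ᵀ` with
`φ = (⨂ w_k) ψ`; it is unitary up to a scalar, so all entries of `φ` have the same modulus. -/

open scoped Kronecker

section UnitaryMatrices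

lemma conjTranspose_mul_mul_mul_of_isometry {l m n R : Type*} [Fintype m] [Fintype n]
    [DecidableEq n] [Semiring R] [StarRing R] {S : Matrix m n R} (hS : Sᴴ * S = 1)
    (B : Matrix n l R) : (S * B)ᴴ * (S * B) = Bᴴ * B := by
  rw [conjTranspose_mul, Matrix.mul_assoc, ← Matrix.mul_assoc Sᴴ, hS, Matrix.one_mul]

lemma exists_linearIsometry_comp_eq {𝕜 E F : Type*} [RCLike 𝕜] [AddCommGroup E] [Module 𝕜 E]
    [NormedAddCommGroup F] [InnerProductSpace 𝕜 F] [FiniteDimensional 𝕜 F] {f g : E →ₗ[𝕜] F}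
    (h : ∀ x, ‖f x‖ = ‖g x‖) : ∃ W : F →ₗᵢ[𝕜] F, ∀ x, f x = W (g x) := by
  obtain ⟨s, hs⟩ := g.rangeRestrict.exists_rightInverse_of_surjective g.range_rangeRestrict
  have hgs : ∀ y : LinearMap.range g, g (s y) = y := fun y =>
    congrArg Subtype.val (LinearMap.congr_fun hs y)
  let W₀ : LinearMap.range g →ₗᵢ[𝕜] F :=
    ⟨f ∘ₗ s, fun y => by rw [LinearMap.comp_apply, h, hgs, Submodule.coe_norm]⟩
  refine ⟨W₀.extend, fun x => ?_⟩
  have hx : f x = f (s (g.rangeRestrict x)) := by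
    rw [← sub_eq_zero, ← map_sub, ← norm_eq_zero, h, map_sub, hgs, LinearMap.codRestrict_apply,
      sub_self, norm_zero]
  rw [hx]
  exact (W₀.extend_apply (g.rangeRestrict x)).symm

open scoped InnerProductSpace in
lemma exists_mem_unitaryGroup_mul_eq {𝕜 m n : Type*} [RCLike 𝕜] [Finite m] [Fintype n]
    [DecidableEq n] {A B : Matrix n m 𝕜} (h : Aᴴ * A = Bᴴ * B) :
    ∃ w ∈ unitaryGroup n 𝕜, A = w * B := by
  classical
  have := Fintype.ofFinite m
  have hnorm (x : EuclideanSpace 𝕜 m) : ‖A.toEuclideanLin x‖ = ‖B.toEuclideanLin x‖ := by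
    have hinner (C : Matrix n m 𝕜) :
        ⟪C.toEuclideanLin x, C.toEuclideanLin x⟫_𝕜 = ⟪(Cᴴ * C).toEuclideanLin x, x⟫_𝕜 := by
      rw [← LinearMap.adjoint_inner_left, ← toEuclideanLin_conjTranspose_eq_adjoint]
      simp only [toLpLin_apply, mulVec_mulVec]
    rw [← sq_eq_sq₀ (norm_nonneg _) (norm_nonneg _), ← inner_self_eq_norm_sq (𝕜 := 𝕜),
      ← inner_self_eq_norm_sq (𝕜 := 𝕜), hinner, hinner, h]
  obtain ⟨W, hW⟩ := exists_linearIsometry_comp_eq hnorm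
  have hmul : A = toEuclideanLin.symm W.toLinearMap * B := by
    apply toEuclideanLin.injective
    ext1 x
    rw [toLpLin_mul 2 2 2, LinearMap.comp_apply, LinearEquiv.apply_symm_apply, hW]
    rfl
  have hunitary : toEuclideanLin.symm W.toLinearMap ∈ unitaryGroup n 𝕜 := by
    rw [mem_unitaryGroup_iff', star_eq_conjTranspose]
    apply toEuclideanLin.injective
    rw [toLpLin_mul 2 2 2, toEuclideanLin_conjTranspose_eq_adjoint, LinearEquiv.apply_symm_apply,
      toLpLin_one]
    refine LinearMap.ext fun x => ext_inner_right 𝕜 fun y => ?_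
    rw [LinearMap.comp_apply, LinearMap.adjoint_inner_left]
    exact W.inner_map_map x y
  exact ⟨_, hunitary, hmul⟩

lemma exists_mem_unitaryGroup_mul_mul_eq {𝕜 l m n : Type*} [RCLike 𝕜] [Finite l] [Fintype m]
    [Fintype n] [DecidableEq n] {V T : Matrix m n 𝕜} (hV : Vᴴ * V = 1) (hT : Tᴴ * T = 1)
    {A C : Matrix n l 𝕜} (h : V * A = T * C) : ∃ w ∈ unitaryGroup n 𝕜, V * A = T * w * A := by
  obtain ⟨w, hw, hC⟩ : ∃ w ∈ unitaryGroup n 𝕜, C = w * A :=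
    exists_mem_unitaryGroup_mul_eq <| by
      rw [← conjTranspose_mul_mul_mul_of_isometry hT, ← h,
        conjTranspose_mul_mul_mul_of_isometry hV]
  exact ⟨w, hw, by rw [h, hC, Matrix.mul_assoc]⟩

lemma map_ofReal_mem_unitaryGroup {n : Type*} [Fintype n] [DecidableEq n] {O : Matrix n n ℝ}
    (hO : O ∈ orthogonalGroup n ℝ) : O.map Complex.ofReal ∈ unitaryGroup n ℂ := by
  have h := congrArg (fun A : Matrix n n ℝ => A.map Complex.ofRealHom) (mem_unitaryGroup_iff'.1 hO)
  simp only [Matrix.map_mul, star_eq_conjTranspose,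
    conjTranspose_map Complex.ofRealHom fun x => (Complex.conj_ofReal x).symm,
    Matrix.map_one _ (map_zero _) (map_one _)] at h
  exact mem_unitaryGroup_iff'.2 h

lemma exists_orthogonalGroup_mul_diagonal_mul {n : Type*} [Fintype n] [DecidableEq n]
    {S : Matrix n n ℂ} (hS : S.IsHermitian) (hsymm : S.IsSymm) :
    ∃ O ∈ orthogonalGroup n ℝ, ∃ d : n → ℝ,
      S = O.map Complex.ofReal * diagonal (Complex.ofReal ∘ d) * (O.map Complex.ofReal)ᴴ := by
  have hre : (S.map Complex.re).map Complex.ofReal = S := by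
    ext i j
    exact Complex.conj_eq_iff_re.1 ((hS.apply j i).trans (hsymm.apply i j))
  have hreHerm : (S.map Complex.re).IsHermitian :=
    IsHermitian.ext fun i j => congrArg Complex.re (hsymm.apply i j)
  refine ⟨_, hreHerm.eigenvectorUnitary.2, hreHerm.eigenvalues, ?_⟩
  have hspec := congrArg (fun A : Matrix n n ℝ => A.map Complex.ofRealHom)
    hreHerm.spectral_theorem
  simp only [Unitary.conjStarAlgAut_apply, Matrix.map_mul, diagonal_map (map_zero _),
    star_eq_conjTranspose] at hspec
  refine hre.symm.trans (hspec.trans ?_)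
  rw [conjTranspose_map Complex.ofRealHom fun x => (Complex.conj_ofReal x).symm]
  rfl

lemma conjTranspose_mul_self_eq_smul_one {n K : Type*} [Fintype n] [DecidableEq n] [Field K]
    [StarRing K] {M : Matrix n n K} {c : K} (hc : c ≠ 0) (hM : M * Mᴴ = c • 1) :
    Mᴴ * M = c • 1 := by
  have h : (c⁻¹ • M) * Mᴴ = 1 := by rw [Matrix.smul_mul, hM, inv_smul_smul₀ hc]
  rw [← mul_eq_one_comm.1 h, Matrix.mul_smul, smul_inv_smul₀ hc]

lemma norm_eq_sqrt_of_mul_diagonal_mul {n : Type*} [Fintype n] [DecidableEq n]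
    {A B : Matrix n n ℂ} (hA : A ∈ unitaryGroup n ℂ) (hB : B ∈ unitaryGroup n ℂ) {φ : n → ℂ} {c : ℝ}
    (h : (A * diagonal φ * B) * (A * diagonal φ * B)ᴴ = (c : ℂ) • 1) (y : n) :
    ‖φ y‖ = √c := by
  have hAA : Aᴴ * A = 1 := mem_unitaryGroup_iff'.1 hA
  have hBB : B * Bᴴ = 1 := mem_unitaryGroup_iff.1 hB
  have hdiag : diagonal φ * (diagonal φ)ᴴ = (c : ℂ) • 1 := by
    calc diagonal φ * (diagonal φ)ᴴ
        = (Aᴴ * A) * diagonal φ * (B * Bᴴ) * (diagonal φ)ᴴ * (Aᴴ * A) := by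
          rw [hAA, hBB, Matrix.one_mul, Matrix.mul_one, Matrix.mul_one]
      _ = Aᴴ * ((A * diagonal φ * B) * (A * diagonal φ * B)ᴴ) * A := by
          simp only [conjTranspose_mul, Matrix.mul_assoc]
      _ = (c : ℂ) • 1 := by
          rw [h, Matrix.mul_smul, Matrix.mul_one, Matrix.smul_mul, hAA]
  rw [diagonal_conjTranspose, diagonal_mul_diagonal] at hdiag
  have hy : φ y * star (φ y) = c := by simpa using congrFun (congrFun hdiag y) y
  rw [Complex.star_def, Complex.mul_conj'] at hy
  have hsq : ‖φ y‖ ^ 2 = c := by exact_mod_cast hy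
  rw [← hsq, Real.sqrt_sq (norm_nonneg _)]

end UnitaryMatrices

section PiKronecker

variable {ι : Type*} [Fintype ι] {l m n : ι → Type*} {R : Type*}

/-- The tensor product `⨂ i, A i` of a family of matrices, as a multilinear map in the family. Its
rows and columns are indexed by the words `x : ∀ i, m i` and `y : ∀ i, n i` that label the product
bases. -/
def piKronecker [CommSemiring R] :
    MultilinearMap R (fun i => Matrix (m i) (n i) R) (Matrix (∀ i, m i) (∀ i, n i) R) where
  toFun A := of fun x y => ∏ i, A i (x i) (y i)
  map_update_add' A i B C := by
    ext x y
    exact ((MultilinearMap.mkPiAlgebra R ι R).compLinearMap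
      fun j => entryLinearMap R R (x j) (y j)).map_update_add A i B C
  map_update_smul' A i c B := by
    ext x y
    exact ((MultilinearMap.mkPiAlgebra R ι R).compLinearMap
      fun j => entryLinearMap R R (x j) (y j)).map_update_smul A i c B

section CommSemiring

variable [CommSemiring R]

lemma piKronecker_apply (A : ∀ i, Matrix (m i) (n i) R) (x : ∀ i, m i) (y : ∀ i, n i) :
    piKronecker A x y = ∏ i, A i (x i) (y i) := rfl

lemma piKronecker_mul [DecidableEq ι] [∀ i, Fintype (m i)] (A : ∀ i, Matrix (l i) (m i) R)
    (B : ∀ i, Matrix (m i) (n i) R) :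
    piKronecker (fun i => A i * B i) = piKronecker A * piKronecker B := by
  ext x y
  simp only [piKronecker_apply, mul_apply, ← Finset.prod_mul_distrib]
  exact Fintype.prod_sum fun i j => A i (x i) j * B i j (y i)

lemma piKronecker_one [∀ i, DecidableEq (m i)] :
    piKronecker (fun i => (1 : Matrix (m i) (m i) R)) = 1 := by
  ext x y
  simp only [piKronecker_apply, one_apply, Finset.prod_ite_zero, Finset.prod_const_one,
    Finset.mem_univ, true_imp_iff, funext_iff]

lemma piKronecker_conjTranspose [StarRing R] (A : ∀ i, Matrix (m i) (n i) R) :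
    piKronecker (fun i => (A i)ᴴ) = (piKronecker A)ᴴ := by
  ext x y
  simp only [piKronecker_apply, conjTranspose_apply, star_prod]

lemma trace_piKronecker [DecidableEq ι] [∀ i, Fintype (m i)] (A : ∀ i, Matrix (m i) (m i) R) :
    (piKronecker A).trace = ∏ i, (A i).trace := by
  simp only [trace, diag, piKronecker_apply]
  exact (Fintype.prod_sum fun i j => A i j j).symm

lemma piKronecker_conjTranspose_mul_self_eq_one [StarRing R] [DecidableEq ι] [∀ i, Fintype (m i)]
    [∀ i, DecidableEq (n i)] {A : ∀ i, Matrix (m i) (n i) R} (hA : ∀ i, (A i)ᴴ * A i = 1) :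
    (piKronecker A)ᴴ * piKronecker A = 1 := by
  rw [← piKronecker_conjTranspose, ← piKronecker_mul]
  simp only [hA, piKronecker_one]

end CommSemiring

lemma piKronecker_mem_unitaryGroup [CommRing R] [StarRing R] [DecidableEq ι] [∀ i, Fintype (m i)]
    [∀ i, DecidableEq (m i)] {A : ∀ i, Matrix (m i) (m i) R}
    (hA : ∀ i, A i ∈ unitaryGroup (m i) R) :
    piKronecker A ∈ unitaryGroup (∀ i, m i) R :=
  mem_unitaryGroup_iff'.2 <|
    piKronecker_conjTranspose_mul_self_eq_one fun i => mem_unitaryGroup_iff'.1 (hA i)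

end PiKronecker

section SiteOperator

variable {ι : Type*} [Fintype ι] [DecidableEq ι] {m n : ι → Type*} {R : Type*} [CommSemiring R]
  [∀ i, DecidableEq (m i)] [∀ i, DecidableEq (n i)]

/-- The operator on `⨂ i, R^(n i)` that acts as `O` on the `k`-th tensor factor and trivially on
the others, as a linear function of `O`. -/
def siteOperator (k : ι) : Matrix (n k) (n k) R →ₗ[R] Matrix (∀ i, n i) (∀ i, n i) R :=
  piKronecker.toLinearMap (fun _ => 1) k

lemma siteOperator_apply (k : ι) (O : Matrix (n k) (n k) R) :
    siteOperator k O = piKronecker (Function.update (fun _ => 1) k O) := rfl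

lemma siteOperator_one (k : ι) : siteOperator k (1 : Matrix (n k) (n k) R) = 1 := by
  rw [siteOperator_apply, Function.update_eq_self_iff.2 rfl, piKronecker_one]

lemma siteOperator_conjTranspose [StarRing R] (k : ι) (O : Matrix (n k) (n k) R) :
    siteOperator k Oᴴ = (siteOperator k O)ᴴ := by
  rw [siteOperator_apply, siteOperator_apply, ← piKronecker_conjTranspose]
  congr 1
  funext i
  rw [Function.apply_update fun _ => conjTranspose]
  simp only [conjTranspose_one]

lemma trace_siteOperator_eq_zero [∀ i, Fintype (n i)] {k : ι} {O : Matrix (n k) (n k) R}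
    (hO : O.trace = 0) : (siteOperator k O).trace = 0 := by
  rw [siteOperator_apply, trace_piKronecker]
  exact Finset.prod_eq_zero (Finset.mem_univ k) (by rw [Function.update_self, hO])

lemma conjTranspose_piKronecker_mul_siteOperator_mul [StarRing R] [∀ i, Fintype (m i)]
    {V : ∀ i, Matrix (m i) (n i) R} {k : ι} (hV : ∀ i ≠ k, (V i)ᴴ * V i = 1)
    (O : Matrix (m k) (m k) R) :
    (piKronecker V)ᴴ * siteOperator k O * piKronecker V = siteOperator k ((V k)ᴴ * O * V k) := by
  rw [siteOperator_apply, siteOperator_apply, ← piKronecker_conjTranspose, ← piKronecker_mul,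
    ← piKronecker_mul]
  congr 1
  funext i
  rcases eq_or_ne i k with rfl | hi
  · simp only [Function.update_self]
  · simp only [Function.update_of_ne hi, Matrix.mul_one, hV i hi]

end SiteOperator

section CoefficientMatrix

variable {ι : Type*} {l m n p : ι → Type*} {R : Type*}

/-- The coefficients of a vector `Φ ∈ ⨂ i, (R^(m i) ⊗ R^(n i))`, arranged as a matrix for the
bipartition that separates all first tensor factors from all second ones. -/
def coefficientMatrix (Φ : (∀ i, m i × n i) → R) : Matrix (∀ i, m i) (∀ i, n i) R :=
  of fun a b => Φ fun i => (a i, b i)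

variable [Fintype ι] [DecidableEq ι] [∀ i, Fintype (m i)] [∀ i, Fintype (n i)]

lemma star_dotProduct_eq_trace_coefficientMatrix [CommSemiring R] [StarRing R]
    (Φ Ψ : (∀ i, m i × n i) → R) :
    star Φ ⬝ᵥ Ψ = ((coefficientMatrix Φ)ᴴ * coefficientMatrix Ψ).trace := by
  simp only [trace, diag, mul_apply, dotProduct]
  rw [← (Equiv.arrowProdEquivProdArrow ι m n).symm.sum_comp, Fintype.sum_prod_type_right]
  rfl

lemma coefficientMatrix_piKronecker_kronecker_mulVec [CommSemiring R]
    (A : ∀ i, Matrix (l i) (m i) R) (B : ∀ i, Matrix (p i) (n i) R) (Φ : (∀ i, m i × n i) → R) :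
    coefficientMatrix (piKronecker (fun i => A i ⊗ₖ B i) *ᵥ Φ) =
      piKronecker A * coefficientMatrix Φ * (piKronecker B)ᵀ := by
  ext a b
  simp only [coefficientMatrix, mul_apply, mulVec, dotProduct, of_apply, transpose_apply,
    piKronecker_apply, kroneckerMap_apply, Finset.sum_mul]
  rw [← (Equiv.arrowProdEquivProdArrow ι m n).symm.sum_comp, Fintype.sum_prod_type_right]
  refine Finset.sum_congr rfl fun y _ => Finset.sum_congr rfl fun x _ => ?_
  simp only [Equiv.arrowProdEquivProdArrow, Equiv.coe_fn_symm_mk, Finset.prod_mul_distrib]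
  ring

variable [∀ i, DecidableEq (m i)] [∀ i, DecidableEq (n i)]

lemma coefficientMatrix_siteOperator_kronecker_one_mulVec [CommSemiring R] (k : ι)
    (O : Matrix (m k) (m k) R) (Φ : (∀ i, m i × n i) → R) :
    coefficientMatrix (siteOperator k (O ⊗ₖ (1 : Matrix (n k) (n k) R)) *ᵥ Φ) =
      siteOperator k O * coefficientMatrix Φ := by
  have hsite : siteOperator k (O ⊗ₖ (1 : Matrix (n k) (n k) R)) = piKronecker fun i =>
      Function.update (fun i => (1 : Matrix (m i) (m i) R)) k O i ⊗ₖ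
        (1 : Matrix (n i) (n i) R) := by
    rw [siteOperator_apply]
    congr 1
    funext i
    rw [Function.apply_update fun i (A : Matrix (m i) (m i) R) => A ⊗ₖ (1 : Matrix (n i) (n i) R)]
    simp only [one_kronecker_one]
  rw [hsite, coefficientMatrix_piKronecker_kronecker_mulVec, piKronecker_one, transpose_one,
    Matrix.mul_one, siteOperator_apply]

lemma coefficientMatrix_siteOperator_one_kronecker_mulVec [CommSemiring R] (k : ι)
    (O : Matrix (n k) (n k) R) (Φ : (∀ i, m i × n i) → R) :
    coefficientMatrix (siteOperator k ((1 : Matrix (m k) (m k) R) ⊗ₖ O) *ᵥ Φ) =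
      coefficientMatrix Φ * (siteOperator k O)ᵀ := by
  have hsite : siteOperator k ((1 : Matrix (m k) (m k) R) ⊗ₖ O) = piKronecker fun i =>
      (1 : Matrix (m i) (m i) R) ⊗ₖ
        Function.update (fun i => (1 : Matrix (n i) (n i) R)) k O i := by
    rw [siteOperator_apply]
    congr 1
    funext i
    rw [Function.apply_update fun i (A : Matrix (n i) (n i) R) => (1 : Matrix (m i) (m i) R) ⊗ₖ A]
    simp only [one_kronecker_one]
  rw [hsite, coefficientMatrix_piKronecker_kronecker_mulVec, piKronecker_one, Matrix.one_mul,
    siteOperator_apply]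

end CoefficientMatrix

section ReducedDensity

variable {ι : Type*} [Fintype ι] [DecidableEq ι] {m n : ι → Type*}
  [∀ i, Fintype (m i)] [∀ i, Fintype (n i)] [∀ i, DecidableEq (n i)]

/-- The expectation value `⟨ψ| O_k |ψ⟩` in a multipartite vector `ψ` of an operator `O` on the
`k`-th tensor factor, as a linear functional of `O`. -/
def siteExpectation (ψ : (∀ i, n i) → ℂ) (k : ι) : Matrix (n k) (n k) ℂ →ₗ[ℂ] ℂ :=
  dotProductBilin ℂ ℂ (star ψ) ∘ₗ (mulVecBilin ℂ ℂ).flip ψ ∘ₗ siteOperator k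

lemma siteExpectation_apply (ψ : (∀ i, n i) → ℂ) (k : ι) (O : Matrix (n k) (n k) ℂ) :
    siteExpectation ψ k O = star ψ ⬝ᵥ siteOperator k O *ᵥ ψ := rfl

/-- The reduced density matrix of the `k`-th tensor factor of a multipartite vector `ψ`, defined by
duality with `siteExpectation`. -/
def reducedDensity (ψ : (∀ i, n i) → ℂ) (k : ι) : Matrix (n k) (n k) ℂ :=
  of fun s t => siteExpectation ψ k (single t s 1)

lemma trace_reducedDensity_mul (ψ : (∀ i, n i) → ℂ) (k : ι) (O : Matrix (n k) (n k) ℂ) :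
    (reducedDensity ψ k * O).trace = siteExpectation ψ k O := by
  conv_rhs => rw [matrix_eq_sum_single O, Finset.sum_comm]
  simp only [map_sum, trace, diag, mul_apply, reducedDensity, of_apply]
  refine Finset.sum_congr rfl fun s _ => Finset.sum_congr rfl fun t _ => ?_
  rw [← mul_one (O t s), ← smul_eq_mul (O t s), ← smul_single, map_smul, smul_eq_mul, smul_eq_mul,
    mul_one, mul_comm]

lemma siteExpectation_conjTranspose (ψ : (∀ i, n i) → ℂ) (k : ι) (O : Matrix (n k) (n k) ℂ) :
    siteExpectation ψ k Oᴴ = star (siteExpectation ψ k O) := by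
  rw [siteExpectation_apply, siteExpectation_apply, siteOperator_conjTranspose, star_dotProduct,
    star_mulVec, conjTranspose_conjTranspose, dotProduct_mulVec]

lemma reducedDensity_isHermitian (ψ : (∀ i, n i) → ℂ) (k : ι) :
    (reducedDensity ψ k).IsHermitian := by
  ext s t
  simp only [conjTranspose_apply, reducedDensity, of_apply]
  rw [← siteExpectation_conjTranspose, conjTranspose_single, star_one]

lemma siteExpectation_piKronecker_mulVec [∀ i, DecidableEq (m i)] {V : ∀ i, Matrix (m i) (n i) ℂ}
    {k : ι} (hV : ∀ i ≠ k, (V i)ᴴ * V i = 1) (ψ : (∀ i, n i) → ℂ) (O : Matrix (m k) (m k) ℂ) :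
    siteExpectation (piKronecker V *ᵥ ψ) k O = siteExpectation ψ k ((V k)ᴴ * O * V k) := by
  rw [siteExpectation_apply, siteExpectation_apply,
    ← conjTranspose_piKronecker_mul_siteOperator_mul hV, star_mulVec, ← dotProduct_mulVec,
    mulVec_mulVec, mulVec_mulVec, Matrix.mul_assoc]

lemma reducedDensity_piKronecker_mulVec [∀ i, DecidableEq (m i)] {V : ∀ i, Matrix (m i) (n i) ℂ}
    {k : ι} (hV : ∀ i ≠ k, (V i)ᴴ * V i = 1) (ψ : (∀ i, n i) → ℂ) :
    reducedDensity (piKronecker V *ᵥ ψ) k = V k * reducedDensity ψ k * (V k)ᴴ := by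
  rw [ext_iff_trace_mul_right]
  intro O
  rw [trace_reducedDensity_mul, siteExpectation_piKronecker_mulVec hV, ← trace_reducedDensity_mul,
    ← Matrix.mul_assoc, trace_mul_comm]
  simp only [Matrix.mul_assoc]

lemma siteExpectation_one (ψ : (∀ i, n i) → ℂ) (k : ι) : siteExpectation ψ k 1 = star ψ ⬝ᵥ ψ := by
  rw [siteExpectation_apply, siteOperator_one, one_mulVec]

open scoped ComplexOrder in
lemma piKronecker_mulVec_eq_zero {V : ∀ i, Matrix (m i) (n i) ℂ} {k : ι}
    (hV : ∀ i ≠ k, (V i)ᴴ * V i = 1) {ψ : (∀ i, n i) → ℂ} (hk : V k * reducedDensity ψ k = 0) :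
    piKronecker V *ᵥ ψ = 0 := by
  classical
  rw [← dotProduct_star_self_eq_zero, ← siteExpectation_one _ k, ← trace_reducedDensity_mul,
    reducedDensity_piKronecker_mulVec hV, hk, Matrix.zero_mul, Matrix.zero_mul, trace_zero]

lemma piKronecker_mulVec_congr {V W : ∀ i, Matrix (m i) (n i) ℂ} (hV : ∀ i, (V i)ᴴ * V i = 1)
    (hW : ∀ i, (W i)ᴴ * W i = 1) {ψ : (∀ i, n i) → ℂ}
    (h : ∀ i, V i * reducedDensity ψ i = W i * reducedDensity ψ i) :
    piKronecker V *ᵥ ψ = piKronecker W *ᵥ ψ := by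
  suffices ∀ s : Finset ι, piKronecker (s.piecewise W V) *ᵥ ψ = piKronecker V *ᵥ ψ by
    simpa only [Finset.piecewise_univ] using (this Finset.univ).symm
  intro s
  induction s using Finset.induction_on with
  | empty => rw [Finset.piecewise_empty]
  | insert k s hk ih =>
    have hdiff : piKronecker (Function.update (s.piecewise W V) k (W k - V k)) *ᵥ ψ = 0 := by
      refine piKronecker_mulVec_eq_zero (k := k) (fun i hi => ?_) ?_
      · rw [Function.update_of_ne hi]
        exact s.piecewise_cases W V (fun A => Aᴴ * A = 1) (hW i) (hV i)
      · rw [Function.update_self, Matrix.sub_mul, h, sub_self]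
    have hVk : Function.update (s.piecewise W V) k (V k) = s.piecewise W V := by
      rw [Function.update_eq_self_iff, Finset.piecewise_eq_of_notMem _ _ _ hk]
    rw [MultilinearMap.map_update_sub, sub_mulVec, sub_eq_zero, hVk, ih] at hdiff
    rw [Finset.piecewise_insert, hdiff]

end ReducedDensity

section ScalarMarginals

/-- A bipartite operator `σ` has scalar marginals if both of its partial traces are multiples of
the identity. Partial traces enter by duality, through the traces of `σ` against local operators:
a matrix is scalar iff it is orthogonal to all traceless matrices. -/
def HasScalarMarginals {m n : Type*} [Fintype m] [DecidableEq m] [Fintype n] [DecidableEq n]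
    (σ : Matrix (m × n) (m × n) ℂ) : Prop :=
  (∀ O : Matrix m m ℂ, O.trace = 0 → (σ * (O ⊗ₖ (1 : Matrix n n ℂ))).trace = 0) ∧
    ∀ O : Matrix n n ℂ, O.trace = 0 → (σ * ((1 : Matrix m m ℂ) ⊗ₖ O)).trace = 0

variable {ι : Type*} [Fintype ι] [DecidableEq ι] {m n : ι → Type*}
  [∀ i, Fintype (m i)] [∀ i, DecidableEq (m i)] [∀ i, Fintype (n i)] [∀ i, DecidableEq (n i)]

lemma hasScalarMarginals_reducedDensity {Φ : (∀ i, m i × n i) → ℂ} {c d : ℂ}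
    (hleft : coefficientMatrix Φ * (coefficientMatrix Φ)ᴴ = c • 1)
    (hright : (coefficientMatrix Φ)ᴴ * coefficientMatrix Φ = d • 1) (k : ι) :
    HasScalarMarginals (reducedDensity Φ k) := by
  constructor <;> intro O hO <;>
    rw [trace_reducedDensity_mul, siteExpectation_apply,
      star_dotProduct_eq_trace_coefficientMatrix]
  · rw [coefficientMatrix_siteOperator_kronecker_one_mulVec, trace_mul_comm, Matrix.mul_assoc,
      hleft, mul_smul_comm, Matrix.mul_one, trace_smul, trace_siteOperator_eq_zero hO, smul_zero]
  · rw [coefficientMatrix_siteOperator_one_kronecker_mulVec, ← Matrix.mul_assoc, hright,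
      smul_mul_assoc, Matrix.one_mul, trace_smul, trace_transpose, trace_siteOperator_eq_zero hO,
      smul_zero]

end ScalarMarginals

section Quaternions

/-- The matrices `1, iσ_z, iσ_y, iσ_x` of the quaternion units `1, i, j, k`. -/
def quaternionUnit : Fin 4 → Matrix (Fin 2) (Fin 2) ℂ :=
  ![1, !![Complex.I, 0; 0, -Complex.I], !![0, 1; -1, 0], !![0, Complex.I; Complex.I, 0]]

/-- The matrix of the real quaternion with coordinates `x` in the basis `quaternionUnit`. -/
def quaternionMatrix (x : Fin 4 → ℝ) : Matrix (Fin 2) (Fin 2) ℂ :=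
  ∑ μ, (x μ : ℂ) • quaternionUnit μ

lemma conjTranspose_quaternionMatrix_mul_add (x y : Fin 4 → ℝ) :
    (quaternionMatrix x)ᴴ * quaternionMatrix y + (quaternionMatrix y)ᴴ * quaternionMatrix x =
      ((2 * (x ⬝ᵥ y) : ℝ) : ℂ) • 1 := by
  ext a b
  fin_cases a <;> fin_cases b <;>
    simp [quaternionMatrix, quaternionUnit, mul_apply, Fin.sum_univ_four, dotProduct] <;>
    grind [Complex.I_mul_I]

lemma exists_quaternionMatrix_eq_mul_diagonal_mul {x y : Fin 4 → ℝ} (hx : x ⬝ᵥ x = 1)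
    (hxy : x ⬝ᵥ y = 0) :
    ∃ L ∈ unitaryGroup (Fin 2) ℂ, ∃ R ∈ unitaryGroup (Fin 2) ℂ, ∃ d : Fin 2 → ℂ,
      quaternionMatrix x = L * R ∧ quaternionMatrix y = L * diagonal d * R := by
  set X := quaternionMatrix x
  set Y := quaternionMatrix y
  have hX : Xᴴ * X = 1 := by
    have h := conjTranspose_quaternionMatrix_mul_add x x
    rw [hx, ← two_smul ℂ] at h
    simpa using h
  have hanti : (Xᴴ * Y)ᴴ = -(Xᴴ * Y) := by
    have h := conjTranspose_quaternionMatrix_mul_add x y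
    rw [hxy, mul_zero, Complex.ofReal_zero, zero_smul] at h
    rw [conjTranspose_mul, conjTranspose_conjTranspose]
    exact eq_neg_of_add_eq_zero_right h
  have hherm : (Complex.I • (Xᴴ * Y)).IsHermitian := by
    rw [IsHermitian, conjTranspose_smul, hanti]
    simp
  have hXU : X ∈ unitaryGroup (Fin 2) ℂ := mem_unitaryGroup_iff'.2 hX
  obtain ⟨U, e, hU⟩ : ∃ (U : unitaryGroup (Fin 2) ℂ) (e : Fin 2 → ℂ),
      Complex.I • (Xᴴ * Y) = U * diagonal e * star U.1 :=
    ⟨_, _, hherm.spectral_theorem⟩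
  refine ⟨X * U, mul_mem hXU U.2, star U.1, (star U).2, -Complex.I • e, ?_, ?_⟩
  · rw [Matrix.mul_assoc, mem_unitaryGroup_iff.1 U.2, Matrix.mul_one]
  · calc Y = X * (-Complex.I • (Complex.I • (Xᴴ * Y))) := by
          rw [smul_smul, neg_mul, Complex.I_mul_I, neg_neg, one_smul, ← Matrix.mul_assoc,
            mul_eq_one_comm.1 hX, Matrix.one_mul]
      _ = _ := by
          rw [hU, diagonal_smul]
          simp only [Matrix.mul_assoc, Matrix.mul_smul, Matrix.smul_mul]

end Quaternions

section MagicBasis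

/-- The magic basis of `ℂ² ⊗ ℂ²`: the columns are the quaternion units, read as vectors (without
the factor `1 / √2` that would make the matrix unitary). -/
def magicBasis : Matrix (Fin 2 × Fin 2) (Fin 4) ℂ :=
  of fun ab μ => vec (quaternionUnit μ) ab

lemma magicBasis_mulVec (x : Fin 4 → ℝ) :
    magicBasis *ᵥ (Complex.ofReal ∘ x) = vec (quaternionMatrix x) := by
  ext ab
  simp only [magicBasis, quaternionMatrix, mulVec, dotProduct, of_apply, vec, Function.comp_apply,
    Matrix.sum_apply, Matrix.smul_apply, smul_eq_mul, mul_comm]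

lemma magicBasis_mul_conjTranspose : magicBasis * magicBasisᴴ = (2 : ℂ) • 1 := by
  ext ⟨a, b⟩ ⟨a', b'⟩
  fin_cases a <;> fin_cases b <;> fin_cases a' <;> fin_cases b' <;>
    simp [magicBasis, quaternionUnit, mul_apply, Fin.sum_univ_four, one_apply] <;> norm_num

/- In the magic basis the traceless local operators `O ⊗ 1` and `1 ⊗ O` span exactly the
antisymmetric matrices, as `so(4) ≅ su(2) ⊕ su(2)`; being orthogonal to them means symmetry. -/
lemma HasScalarMarginals.isSymm_magicBasis_conj {σ : Matrix (Fin 2 × Fin 2) (Fin 2 × Fin 2) ℂ}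
    (hσ : HasScalarMarginals σ) : (magicBasisᴴ * σ * magicBasis).IsSymm := by
  have hleft₀₁ : σ (1, 0) (0, 0) + σ (1, 1) (0, 1) = 0 := by
    simpa [trace, mul_apply, Fintype.sum_prod_type, one_apply] using hσ.1 !![0, 1; 0, 0] (by simp)
  have hleft₁₀ : σ (0, 0) (1, 0) + σ (0, 1) (1, 1) = 0 := by
    simpa [trace, mul_apply, Fintype.sum_prod_type, one_apply] using hσ.1 !![0, 0; 1, 0] (by simp)
  have hleft : σ (0, 0) (0, 0) + σ (0, 1) (0, 1) = σ (1, 0) (1, 0) + σ (1, 1) (1, 1) := by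
    simpa [trace, mul_apply, Fintype.sum_prod_type, one_apply, ← neg_add, add_neg_eq_zero,
      -neg_add_rev] using hσ.1 !![1, 0; 0, -1] (by simp)
  have hright₀₁ : σ (0, 1) (0, 0) + σ (1, 1) (1, 0) = 0 := by
    simpa [trace, mul_apply, Fintype.sum_prod_type, one_apply] using hσ.2 !![0, 1; 0, 0] (by simp)
  have hright₁₀ : σ (0, 0) (0, 1) + σ (1, 0) (1, 1) = 0 := by
    simpa [trace, mul_apply, Fintype.sum_prod_type, one_apply] using hσ.2 !![0, 0; 1, 0] (by simp)
  have hright : σ (0, 0) (0, 0) + σ (1, 0) (1, 0) = σ (0, 1) (0, 1) + σ (1, 1) (1, 1) := by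
    simpa [trace, mul_apply, Fintype.sum_prod_type, one_apply, ← sub_eq_add_neg, sub_add_sub_comm,
      sub_eq_zero] using hσ.2 !![1, 0; 0, -1] (by simp)
  refine IsSymm.ext fun μ ν => ?_
  fin_cases μ <;> fin_cases ν <;>
    simp [magicBasis, quaternionUnit, mul_apply, Fintype.sum_prod_type] <;>
    grind

lemma exists_support_subset_pair {α M : Type*} [Fintype α] [Zero M] [DecidableEq M]
    (hα : 2 ≤ Fintype.card α) {d : α → M} (hd : Fintype.card {i // d i ≠ 0} ≤ 2) :
    ∃ i j, i ≠ j ∧ Function.support d ⊆ {i, j} := by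
  classical
  rw [Fintype.card_subtype] at hd
  obtain ⟨t, ht, htcard⟩ := Finset.exists_superset_card_eq hd hα
  obtain ⟨i, j, hij, rfl⟩ := Finset.card_eq_two.1 htcard
  exact ⟨i, j, hij, fun k hk => by simpa using ht (Finset.mem_filter.2 ⟨Finset.mem_univ k, hk⟩)⟩

lemma HasScalarMarginals.exists_eq_magicBasis_mul {σ : Matrix (Fin 2 × Fin 2) (Fin 2 × Fin 2) ℂ}
    (hσ : HasScalarMarginals σ) (hherm : σ.IsHermitian) (hrank : σ.rank ≤ 2) :
    ∃ O ∈ orthogonalGroup (Fin 4) ℝ, ∃ (d : Fin 4 → ℂ) (B : Matrix (Fin 4) (Fin 2 × Fin 2) ℂ),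
      σ = magicBasis * O.map Complex.ofReal * diagonal d * B ∧
        ∃ i j, i ≠ j ∧ Function.support d ⊆ {i, j} := by
  obtain ⟨O, hO, d, hd⟩ := exists_orthogonalGroup_mul_diagonal_mul
    (isHermitian_conjTranspose_mul_mul magicBasis hherm) hσ.isSymm_magicBasis_conj
  set W := O.map Complex.ofReal
  have hW : Wᴴ * W = 1 := mem_unitaryGroup_iff'.1 (map_ofReal_mem_unitaryGroup hO)
  set D : Fin 4 → ℂ := Complex.ofReal ∘ d
  have hD : diagonal D = Wᴴ * (magicBasisᴴ * σ * magicBasis) * W := by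
    rw [hd, Matrix.mul_assoc, Matrix.mul_assoc, hW, Matrix.mul_one, ← Matrix.mul_assoc, hW,
      Matrix.one_mul]
  have hDrank : (diagonal D).rank ≤ 2 := by
    rw [hD]
    exact (rank_mul_le_left _ _).trans <| (rank_mul_le_right _ _).trans <|
      (rank_mul_le_left _ _).trans <| (rank_mul_le_right _ _).trans hrank
  have hσD : (4 : ℂ) • σ = magicBasis * W * diagonal D * (Wᴴ * magicBasisᴴ) := by
    calc (4 : ℂ) • σ = (magicBasis * magicBasisᴴ) * σ * (magicBasis * magicBasisᴴ) := by
          rw [magicBasis_mul_conjTranspose]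
          simp only [smul_mul_assoc, mul_smul_comm, smul_smul, Matrix.one_mul, Matrix.mul_one]
          norm_num
      _ = magicBasis * (magicBasisᴴ * σ * magicBasis) * magicBasisᴴ := by
          simp only [Matrix.mul_assoc]
      _ = magicBasis * W * diagonal D * (Wᴴ * magicBasisᴴ) := by
          rw [hd]
          simp only [Matrix.mul_assoc]
  rw [rank_diagonal] at hDrank
  refine ⟨O, hO, D, (4⁻¹ : ℂ) • (Wᴴ * magicBasisᴴ), ?_,
    exists_support_subset_pair (by simp) hDrank⟩
  rw [Matrix.mul_smul, ← hσD, inv_smul_smul₀ (by norm_num)]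

end MagicBasis

section CopyIsometry

/-- The isometry `|i⟩ ↦ |i⟩ ⊗ |i⟩` that copies the computational basis. -/
def copyIsometry (n : Type*) [DecidableEq n] : Matrix (n × n) n ℂ :=
  of fun ab i => vec (single i i 1) ab

lemma copyIsometry_mulVec {n : Type*} [Fintype n] [DecidableEq n] (d : n → ℂ) :
    copyIsometry n *ᵥ d = vec (diagonal d) := by
  ext ab
  simp [copyIsometry, mulVec, dotProduct, vec, single_apply, diagonal_apply, ite_and]

lemma conjTranspose_copyIsometry_mul_self {n : Type*} [Fintype n] [DecidableEq n] :
    (copyIsometry n)ᴴ * copyIsometry n = 1 := by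
  ext i j
  rcases eq_or_ne i j with rfl | h <;>
    simp [copyIsometry, mul_apply, Fintype.sum_prod_type, vec, single_apply, ite_and, *]

lemma conjTranspose_kronecker_mul_copyIsometry_mul_self {n : Type*} [Fintype n] [DecidableEq n]
    {L R : Matrix n n ℂ} (hL : L ∈ unitaryGroup n ℂ) (hR : R ∈ unitaryGroup n ℂ) :
    ((L ⊗ₖ R) * copyIsometry n)ᴴ * ((L ⊗ₖ R) * copyIsometry n) = 1 := by
  rw [conjTranspose_mul_mul_mul_of_isometry
    (mem_unitaryGroup_iff'.1 (kronecker_mem_unitary hL hR)), conjTranspose_copyIsometry_mul_self]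

lemma coefficientMatrix_piKronecker_copyIsometry_mulVec {ι : Type*} [Fintype ι] [DecidableEq ι]
    {n : ι → Type*} [∀ i, Fintype (n i)] [∀ i, DecidableEq (n i)] (φ : (∀ i, n i) → ℂ) :
    coefficientMatrix (piKronecker (fun i => copyIsometry (n i)) *ᵥ φ) = diagonal φ := by
  ext a b
  have hentry (x : ∀ i, n i) : piKronecker (fun i => copyIsometry (n i)) (fun i => (a i, b i)) x =
      if x = a ∧ x = b then 1 else 0 := by
    simp only [piKronecker_apply, copyIsometry, of_apply, vec, single_apply, Finset.prod_ite_zero,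
      Finset.prod_const_one, Finset.mem_univ, true_imp_iff, forall_and, funext_iff, and_comm]
  simp only [coefficientMatrix, of_apply, mulVec, dotProduct, hentry, ite_and, ite_mul, one_mul,
    zero_mul, Finset.sum_ite_eq', Finset.mem_univ, if_true, diagonal_apply]

lemma HasScalarMarginals.exists_eq_copyIsometry_mul
    {σ : Matrix (Fin 2 × Fin 2) (Fin 2 × Fin 2) ℂ}
    (hσ : HasScalarMarginals σ) (hherm : σ.IsHermitian) (hrank : σ.rank ≤ 2) :
    ∃ L ∈ unitaryGroup (Fin 2) ℂ, ∃ R ∈ unitaryGroup (Fin 2) ℂ,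
      ∃ C : Matrix (Fin 2) (Fin 2 × Fin 2) ℂ, σ = (L ⊗ₖ R) * copyIsometry (Fin 2) * C := by
  obtain ⟨O, hO, d, B, hσd, i, j, hij, hsupport⟩ := hσ.exists_eq_magicBasis_mul hherm hrank
  have horth (k l) : Oᵀ k ⬝ᵥ Oᵀ l = (1 : Matrix (Fin 4) (Fin 4) ℝ) k l := by
    rw [← mem_unitaryGroup_iff'.1 hO]
    rfl
  obtain ⟨L, hL, R, hR, c, hi, hj⟩ := exists_quaternionMatrix_eq_mul_diagonal_mul
    ((horth i i).trans (one_apply_eq i)) ((horth i j).trans (one_apply_ne hij))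
  set T := (Rᵀ ⊗ₖ L) * copyIsometry (Fin 2)
  have hTvec (e : Fin 2 → ℂ) : T *ᵥ e = vec (L * diagonal e * R) := by
    rw [← mulVec_mulVec, copyIsometry_mulVec, kronecker_mulVec_vec, transpose_transpose]
  have hcol (k) : ∃ e, d k • vec (quaternionMatrix (Oᵀ k)) = T *ᵥ e := by
    by_cases hk : d k = 0
    · exact ⟨0, by rw [hk, zero_smul, mulVec_zero]⟩
    · rcases hsupport hk with rfl | rfl
      · exact ⟨d k • 1, by rw [mulVec_smul, hTvec, hi, Pi.one_def, diagonal_one, Matrix.mul_one]⟩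
      · exact ⟨d k • c, by rw [mulVec_smul, hTvec, hj]⟩
  choose e he using hcol
  refine ⟨Rᵀ, transpose_mem_unitaryGroup_iff.2 hR, L, hL, (of e)ᵀ * B, ?_⟩
  rw [hσd, ← Matrix.mul_assoc]
  congr 1
  ext ab k
  rw [mul_diagonal, mul_comm]
  refine Eq.trans ?_ (congrFun (he k) ab)
  rw [← magicBasis_mulVec]
  rfl

lemma exists_mul_eq_kronecker_mul_copyIsometry_mul {V : Matrix (Fin 2 × Fin 2) (Fin 2) ℂ}
    (hV : Vᴴ * V = 1) {ρ : Matrix (Fin 2) (Fin 2) ℂ} (hρ : ρ.IsHermitian)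
    (hσ : HasScalarMarginals (V * ρ * Vᴴ)) :
    ∃ L ∈ unitaryGroup (Fin 2) ℂ, ∃ R ∈ unitaryGroup (Fin 2) ℂ, ∃ w ∈ unitaryGroup (Fin 2) ℂ,
      V * ρ = (L ⊗ₖ R) * copyIsometry (Fin 2) * w * ρ := by
  have hrank : (V * ρ * Vᴴ).rank ≤ 2 :=
    (rank_mul_le_left _ _).trans <| (rank_mul_le_left _ _).trans <| rank_le_card_width V
  obtain ⟨L, hL, R, hR, C, hC⟩ :=
    hσ.exists_eq_copyIsometry_mul (isHermitian_mul_mul_conjTranspose V hρ) hrank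
  refine ⟨L, hL, R, hR, ?_⟩
  refine exists_mem_unitaryGroup_mul_mul_eq hV
    (conjTranspose_kronecker_mul_copyIsometry_mul_self hL hR) (C := C * V) ?_
  rw [← Matrix.mul_assoc, ← hC, Matrix.mul_assoc, hV, Matrix.mul_one]

end CopyIsometry

theorem exists_unitary_piKronecker_mulVec_eq {ι : Type*} [Fintype ι] [DecidableEq ι]
    {V : ι → Matrix (Fin 2 × Fin 2) (Fin 2) ℂ} (hV : ∀ i, (V i)ᴴ * V i = 1)
    {ψ : (ι → Fin 2) → ℂ} {c : ℝ} (hc : c ≠ 0)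
    (hψ : coefficientMatrix (piKronecker V *ᵥ ψ) * (coefficientMatrix (piKronecker V *ᵥ ψ))ᴴ =
      (c : ℂ) • 1) :
    ∃ u : ι → Matrix (Fin 2) (Fin 2) ℂ, (∀ i, u i ∈ unitaryGroup (Fin 2) ℂ) ∧
      ∃ φ, ψ = piKronecker u *ᵥ φ ∧ ∀ y, ‖φ y‖ = √c := by
  have hmarginals (i) : HasScalarMarginals (V i * reducedDensity ψ i * (V i)ᴴ) := by
    rw [← reducedDensity_piKronecker_mulVec fun j _ => hV j]
    exact hasScalarMarginals_reducedDensity hψ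
      (conjTranspose_mul_self_eq_smul_one (Complex.ofReal_ne_zero.2 hc) hψ) i
  choose L hL R hR w hw hVw using fun i => exists_mul_eq_kronecker_mul_copyIsometry_mul (hV i)
    (reducedDensity_isHermitian ψ i) (hmarginals i)
  set φ := piKronecker w *ᵥ ψ
  have hisometry (i) : ((L i ⊗ₖ R i) * copyIsometry (Fin 2) * w i)ᴴ *
      ((L i ⊗ₖ R i) * copyIsometry (Fin 2) * w i) = 1 := by
    rw [conjTranspose_mul_mul_mul_of_isometry
      (conjTranspose_kronecker_mul_copyIsometry_mul_self (hL i) (hR i))]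
    exact mem_unitaryGroup_iff'.1 (hw i)
  have hcoefficients : coefficientMatrix (piKronecker V *ᵥ ψ) =
      piKronecker L * diagonal φ * (piKronecker R)ᵀ := by
    rw [piKronecker_mulVec_congr hV hisometry hVw, piKronecker_mul, piKronecker_mul,
      ← mulVec_mulVec, ← mulVec_mulVec, coefficientMatrix_piKronecker_kronecker_mulVec,
      coefficientMatrix_piKronecker_copyIsometry_mulVec]
  rw [hcoefficients] at hψ
  refine ⟨fun i => (w i)ᴴ, fun i => Unitary.star_mem (hw i), φ, ?_,
    norm_eq_sqrt_of_mul_diagonal_mul (piKronecker_mem_unitaryGroup hL)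
      (transpose_mem_unitaryGroup_iff.2 (piKronecker_mem_unitaryGroup hR)) hψ⟩
  rw [piKronecker_conjTranspose, mulVec_mulVec,
    piKronecker_conjTranspose_mul_self_eq_one fun i => mem_unitaryGroup_iff'.1 (hw i), one_mulVec]

/-- Every `N`-qubit `(2,2)`-locally maximally entanglable state is
local-unitary equivalent to a phase state
`2^{-N/2} Σ_i e^{iθ_i} |i_1 … i_N⟩`. -/
theorem stmt_14 (N : ℕ) (hN : 1 ≤ N) (ψ : (Fin N → Fin 2) → ℂ)
    (hnorm : ∑ x, (starRingEnd ℂ) (ψ x) * ψ x = 1)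
    (hLME : ∃ V : Fin N → Matrix (Fin 2 × Fin 2) (Fin 2) ℂ,
      (∀ k, (V k)ᴴ * V k = 1) ∧
      ∀ a a' : Fin N → Fin 2,
        (∑ bb : Fin N → Fin 2,
          (∑ x, (∏ k, V k (a k, bb k) (x k)) * ψ x) *
            (starRingEnd ℂ) (∑ x, (∏ k, V k (a' k, bb k) (x k)) * ψ x)) =
          if a = a' then ((2 : ℂ) ^ N)⁻¹ else 0) :
    ∃ u : Fin N → Matrix (Fin 2) (Fin 2) ℂ,
      (∀ k, u k ∈ Matrix.unitaryGroup (Fin 2) ℂ) ∧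
      ∃ θ : (Fin N → Fin 2) → ℝ,
        ∀ x : Fin N → Fin 2,
          ψ x = ∑ y : Fin N → Fin 2,
            (∏ k, u k (x k) (y k)) *
              (((Real.sqrt (2 ^ N) : ℝ) : ℂ))⁻¹ * Complex.exp (θ y * Complex.I) := by
  obtain ⟨V, hV, hΦ⟩ := hLME
  have hc : ((2 : ℝ) ^ N)⁻¹ ≠ 0 := by positivity
  obtain ⟨u, hu, φ, hψ, hφ⟩ := exists_unitary_piKronecker_mulVec_eq hV hc (ψ := ψ) <| by
    ext a a'
    push_cast
    rw [Matrix.smul_apply, one_apply, smul_eq_mul, mul_ite, mul_one, mul_zero, ← hΦ]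
    rfl
  have hpolar (y) : ((√(2 ^ N) : ℝ) : ℂ)⁻¹ * Complex.exp ((φ y).arg * Complex.I) = φ y := by
    rw [← Complex.ofReal_inv, ← Real.sqrt_inv, ← hφ y, Complex.norm_mul_exp_arg_mul_I]
  refine ⟨u, hu, fun y => (φ y).arg, fun x => ?_⟩
  simp only [mul_assoc, hpolar]
  exact congrFun hψ x

end
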